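/- arXiv:2210.05653 — 3 statements merged into one kernel-verified Lean document; each statement's English description precedes it below -/
import Mathlib

section
/- Let K be a field, n ≥ 2, and let f(x_1,…,x_m) be a multilinear polynomial over K. Then Im(f) on M_n(K) is contained in the set of scalar matrices (i.e., f is a central polynomial for M_n(K)) if and only if f satisfies (S1). -/
/-- Evaluation of the multilinear polynomial `f(x₁,…,x_m) = ∑_{σ ∈ S_m} α_σ x_{σ(1)}⋯x_{σ(m)}`
given by coefficients `α` at the tuple `a`. -/
def mlEval {K A : Type} [Field K] [Ring A] [Algebra K A] {m : ℕ}
    (α : Equiv.Perm (Fin m) → K) (a : Fin m → A) : A :=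
  ∑ σ : Equiv.Perm (Fin m), α σ • (List.ofFn fun i => a (σ i)).prod

/-- The image of the multilinear polynomial with coefficients `α` on the algebra `A`. -/
def mlImage {K A : Type} [Field K] [Ring A] [Algebra K A] {m : ℕ}
    (α : Equiv.Perm (Fin m) → K) : Set A :=
  Set.range (mlEval α)

/-- `a` is homogeneous of degree `g` in the Vasilovsky `ZMod n`-grading of `Mₙ(K)`:
`a` lies in the span of the matrix units `E i j` with `j - i ≡ g (mod n)`. -/
def VasHomog {K : Type} [Field K] {n : ℕ} (g : ZMod n)
    (a : Matrix (Fin n) (Fin n) K) : Prop :=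
  ∀ i j : Fin n, ((j.val : ZMod n) - (i.val : ZMod n)) ≠ g → a i j = 0

/-- Statement (S0): `f` vanishes on homogeneous tuples whose degrees sum to `0`. -/
def StmtS0 {K : Type} [Field K] (n : ℕ) {m : ℕ} (α : Equiv.Perm (Fin m) → K) : Prop :=
  ∀ (g : Fin m → ZMod n) (a : Fin m → Matrix (Fin n) (Fin n) K),
    (∀ i, VasHomog (g i) (a i)) → (∑ i, g i) = 0 → mlEval α a = 0

/-- Statement (S1): `f` vanishes on homogeneous tuples whose degrees sum to a nonzero element. -/
def StmtS1 {K : Type} [Field K] (n : ℕ) {m : ℕ} (α : Equiv.Perm (Fin m) → K) : Prop :=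
  ∀ (g : Fin m → ZMod n) (a : Fin m → Matrix (Fin n) (Fin n) K),
    (∀ i, VasHomog (g i) (a i)) → (∑ i, g i) ≠ 0 → mlEval α a = 0

/-- Statement (S2): `f` has trace-zero values on homogeneous tuples whose degrees sum to `0`. -/
def StmtS2 {K : Type} [Field K] (n : ℕ) {m : ℕ} (α : Equiv.Perm (Fin m) → K) : Prop :=
  ∀ (g : Fin m → ZMod n) (a : Fin m → Matrix (Fin n) (Fin n) K),
    (∀ i, VasHomog (g i) (a i)) → (∑ i, g i) = 0 → Matrix.trace (mlEval α a) = 0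

/-- The set of scalar matrices in `Mₙ(K)`. -/
def scalarSet (K : Type) [Field K] (n : ℕ) : Set (Matrix (Fin n) (Fin n) K) :=
  {b | ∃ c : K, b = c • (1 : Matrix (Fin n) (Fin n) K)}

/-- The set `slₙ(K)` of trace-zero matrices in `Mₙ(K)`. -/
def slSet (K : Type) [Field K] (n : ℕ) : Set (Matrix (Fin n) (Fin n) K) :=
  {b | Matrix.trace b = 0}

theorem vas_mul {K : Type} [Field K] {n : ℕ} {g h : ZMod n} {a b : Matrix (Fin n) (Fin n) K}
    (ha : VasHomog g a) (hb : VasHomog h b) : VasHomog (g + h) (a * b) := by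
  intro i j hij
  rw [Matrix.mul_apply]
  refine Finset.sum_eq_zero fun k _ => ?_
  by_cases h1 : ((k.val : ZMod n) - (i.val : ZMod n)) = g
  · have h2 : ((j.val : ZMod n) - (k.val : ZMod n)) ≠ h := by
      intro h2
      apply hij
      rw [← h1, ← h2]
      ring
    rw [hb k j h2, mul_zero]
  · rw [ha i k h1, zero_mul]

theorem vas_one {K : Type} [Field K] {n : ℕ} :
    VasHomog (0 : ZMod n) (1 : Matrix (Fin n) (Fin n) K) := by
  intro i j hij
  apply Matrix.one_apply_ne
  rintro rfl
  exact hij (sub_self _)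

theorem vas_prod {K : Type} [Field K] {n : ℕ} : ∀ {m : ℕ} (g : Fin m → ZMod n)
    (a : Fin m → Matrix (Fin n) (Fin n) K), (∀ i, VasHomog (g i) (a i)) →
    VasHomog (∑ i, g i) (List.ofFn a).prod
  | 0, g, a, _ => by simpa using vas_one
  | m + 1, g, a, h => by
    rw [List.ofFn_succ, List.prod_cons, Fin.sum_univ_succ]
    exact vas_mul (h 0) (vas_prod _ _ fun i => h i.succ)

theorem vas_eval {K : Type} [Field K] {n m : ℕ} (α : Equiv.Perm (Fin m) → K) (g : Fin m → ZMod n)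
    (a : Fin m → Matrix (Fin n) (Fin n) K) (h : ∀ i, VasHomog (g i) (a i)) :
    VasHomog (∑ i, g i) (mlEval α a) := by
  intro i j hij
  rw [mlEval, Matrix.sum_apply]
  refine Finset.sum_eq_zero fun σ _ => ?_
  have := vas_prod (fun i => g (σ i)) (fun i => a (σ i)) (fun i => h _) i j
    (by rwa [Equiv.sum_comp σ g])
  rw [Matrix.smul_apply, this, smul_zero]

theorem fin_cast_inj {n : ℕ} {i j : Fin n} (h : (j.val : ZMod n) - (i.val : ZMod n) = 0) :
    i = j := by
  have h2 := (ZMod.natCast_eq_natCast_iff' _ _ _).1 (sub_eq_zero.1 h)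
  rw [Nat.mod_eq_of_lt j.2, Nat.mod_eq_of_lt i.2] at h2
  exact Fin.ext h2.symm

/-- multilinear map version of the evaluation -/
noncomputable def mlMap {K A : Type} [Field K] [Ring A] [Algebra K A] {m : ℕ}
    (α : Equiv.Perm (Fin m) → K) : MultilinearMap K (fun _ : Fin m => A) A :=
  ∑ σ : Equiv.Perm (Fin m), α σ • (MultilinearMap.mkPiAlgebraFin K m A).domDomCongr σ

theorem mlMap_apply {K A : Type} [Field K] [Ring A] [Algebra K A] {m : ℕ}
    (α : Equiv.Perm (Fin m) → K) (a : Fin m → A) : mlMap α a = mlEval α a := by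
  simp [mlMap, mlEval, MultilinearMap.sum_apply]

/-- homogeneous component -/
def vasComp {K : Type} [Field K] {n : ℕ} (a : Matrix (Fin n) (Fin n) K) (g : ZMod n) :
    Matrix (Fin n) (Fin n) K :=
  Matrix.of fun i j => if ((j.val : ZMod n) - (i.val : ZMod n)) = g then a i j else 0

theorem offdiag {K : Type} [Field K] (n : ℕ) (hn : 2 ≤ n) {m : ℕ}
    (α : Equiv.Perm (Fin m) → K) (h : StmtS1 n α) (a : Fin m → Matrix (Fin n) (Fin n) K)
    (i j : Fin n) (hij : i ≠ j) : mlEval α a i j = 0 := by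
  haveI : NeZero n := ⟨by omega⟩
  have hh : ∀ (b : Matrix (Fin n) (Fin n) K) g, VasHomog g (vasComp b g) := by
    intro b g i j hij
    simp [vasComp, hij]
  have ha : a = fun k => ∑ g : ZMod n, vasComp (a k) g := by
    funext k
    ext i j
    simp [vasComp, Matrix.sum_apply]
  rw [ha, ← mlMap_apply, MultilinearMap.map_sum, Matrix.sum_apply]
  refine Finset.sum_eq_zero fun r _ => ?_
  rw [mlMap_apply]
  by_cases hr : ∑ k, r k = 0
  · refine vas_eval α r _ (fun k => hh _ _) i j ?_
    rw [hr]
    exact fun h => hij (fin_cast_inj h)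
  · rw [h r _ (fun k => hh _ _) hr]
    rfl

theorem conj_prod {A : Type} [Ring A] (u v : A) (huv : v * u = 1) : ∀ {m : ℕ}
    (a : Fin m → A), u * (List.ofFn a).prod = (List.ofFn fun i => u * a i * v).prod * u
  | 0, a => by simp
  | m + 1, a => by
    rw [List.ofFn_succ, List.prod_cons, List.ofFn_succ, List.prod_cons, mul_assoc (u * a 0 * v),
      ← conj_prod u v huv]
    simp only [mul_assoc]
    rw [← mul_assoc v u, huv, one_mul]

theorem conj_eval {K A : Type} [Field K] [Ring A] [Algebra K A] {m : ℕ}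
    (α : Equiv.Perm (Fin m) → K) (u v : A) (huv : v * u = 1) (a : Fin m → A) :
    u * mlEval α a = mlEval α (fun i => u * a i * v) * u := by
  simp only [mlEval, Finset.mul_sum, Finset.sum_mul, mul_smul_comm, smul_mul_assoc,
    conj_prod u v huv]

theorem diag_eq {K : Type} [Field K] (n : ℕ) (hn : 2 ≤ n) {m : ℕ}
    (α : Equiv.Perm (Fin m) → K) (h : StmtS1 n α) (a : Fin m → Matrix (Fin n) (Fin n) K)
    (i j : Fin n) (hij : i ≠ j) : mlEval α a i i = mlEval α a j j := by
  have huv : (1 - Matrix.single i j (1 : K)) * (1 + Matrix.single i j (1 : K)) = 1 := by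
    have : Matrix.single i j (1 : K) * Matrix.single i j (1 : K) = 0 := by
      rw [Matrix.single_mul_single_of_ne]
      exact hij.symm
    rw [sub_mul, mul_add, mul_add, this]
    simp
  have key := conj_eval α _ _ huv a
  set b := mlEval α (fun k => (1 + Matrix.single i j (1 : K)) * a k *
    (1 - Matrix.single i j (1 : K))) with hb
  have h1 := congrFun (congrFun key i) i
  have h2 := congrFun (congrFun key i) j
  have o1 := offdiag n hn α h a i j hij
  have o2 := offdiag n hn α h a j i hij.symm
  have o3 : b i j = 0 := offdiag n hn α h _ i j hij
  simp [add_mul, mul_add, o1, o2, o3, hij, hij.symm] at h1 h2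
  rw [h1, h2]

/-- the image of a multilinear polynomial on `Mₙ(K)` is contained in the scalar
matrices (i.e. `f` is a central polynomial) iff `f` satisfies (S1). -/
theorem stmt_2 {K : Type} [Field K] (n : ℕ) (hn : 2 ≤ n) {m : ℕ}
    (α : Equiv.Perm (Fin m) → K) :
    (mlImage α : Set (Matrix (Fin n) (Fin n) K)) ⊆ scalarSet K n ↔ StmtS1 n α := by
  constructor
  · intro h g a ha hg
    obtain ⟨c, hc⟩ := h ⟨a, rfl⟩
    have hv := vas_eval α g a ha
    have h0 : (0 : ℕ) < n := by omega
    have h00 := hv ⟨0, h0⟩ ⟨0, h0⟩ (by rw [sub_self]; exact hg.symm)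
    rw [hc] at h00 ⊢
    simp at h00
    rw [h00, zero_smul]
  · rintro h _ ⟨a, rfl⟩
    have h0 : (0 : ℕ) < n := by omega
    refine ⟨mlEval α a ⟨0, h0⟩ ⟨0, h0⟩, ?_⟩
    ext i j
    by_cases hij : i = j
    · subst hij
      by_cases hi : i = ⟨0, h0⟩
      · rw [hi]; simp
      · rw [diag_eq n hn α h a i ⟨0, h0⟩ hi]; simp
    · rw [offdiag n hn α h a i j hij]
      simp [hij]
end

section
/- Let K be a field, n ≥ 2, and let f(x_1,…,x_m) be a multilinear polynomial over K. Then f does not satisfy (S1) if and only if the K-linear span of Im(f) on M_n(K) contains sl_n(K). -/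
open Matrix in
lemma aux_prod {K : Type} [Field K] {n : ℕ} {G : Type} [AddCommGroup G] (w : Fin n → G) :
    ∀ {m : ℕ} (g : Fin m → G) (a : Fin m → Matrix (Fin n) (Fin n) K),
      (∀ k i j, a k i j ≠ 0 → w j - w i = g k) →
      ∀ i j, (List.ofFn a).prod i j ≠ 0 → w j - w i = ∑ k, g k := by
  intro m
  induction m with
  | zero =>
    intro g a _ i j h
    by_cases hij : i = j
    · simp [hij]
    · simp [Matrix.one_apply_ne hij] at h
  | succ m ih =>
    intro g a ha i j h
    rw [List.ofFn_succ, List.prod_cons, Matrix.mul_apply] at h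
    obtain ⟨k, _, hk⟩ := Finset.exists_ne_zero_of_sum_ne_zero h
    have h1 := ha 0 i k (left_ne_zero_of_mul hk)
    have h2 := ih (fun k => g k.succ) (fun k => a k.succ) (fun k i j => ha k.succ i j) k j
      (right_ne_zero_of_mul hk)
    rw [Fin.sum_univ_succ, ← h1, ← h2]
    abel

lemma aux_eval {K : Type} [Field K] {n : ℕ} {G : Type} [AddCommGroup G] (w : Fin n → G)
    {m : ℕ} (α : Equiv.Perm (Fin m) → K) (g : Fin m → G) (a : Fin m → Matrix (Fin n) (Fin n) K)
    (ha : ∀ k i j, a k i j ≠ 0 → w j - w i = g k)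
    (i j : Fin n) (h : mlEval α a i j ≠ 0) : w j - w i = ∑ k, g k := by
  unfold mlEval at h
  rw [Matrix.sum_apply] at h
  obtain ⟨σ, _, hσ⟩ := Finset.exists_ne_zero_of_sum_ne_zero h
  rw [Matrix.smul_apply, smul_eq_mul] at hσ
  have := aux_prod w (fun k => g (σ k)) (fun k => a (σ k)) (fun k i j => ha (σ k) i j) i j
    (right_ne_zero_of_mul hσ)
  rw [this, Equiv.sum_comp σ g]

def auxML {K A : Type} [Field K] [Ring A] [Algebra K A] {m : ℕ}
    (α : Equiv.Perm (Fin m) → K) : MultilinearMap K (fun _ : Fin m => A) A :=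
  ∑ σ : Equiv.Perm (Fin m), α σ • (MultilinearMap.mkPiAlgebraFin K m A).domDomCongr σ

lemma auxML_apply {K A : Type} [Field K] [Ring A] [Algebra K A] {m : ℕ}
    (α : Equiv.Perm (Fin m) → K) (a : Fin m → A) : auxML α a = mlEval α a := by
  simp [auxML, mlEval]

lemma aux_expand {K : Type} [Field K] {n m : ℕ}
    (α : Equiv.Perm (Fin m) → K) (a : Fin m → Matrix (Fin n) (Fin n) K) :
    mlEval α a = ∑ r : Fin m → Fin n × Fin n,
      mlEval α (fun k => Matrix.single (r k).1 (r k).2 (a k (r k).1 (r k).2)) := by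
  have h : a = fun k => ∑ s : Fin n × Fin n, Matrix.single s.1 s.2 (a k s.1 s.2) := by
    funext k
    rw [Fintype.sum_prod_type]
    exact Matrix.matrix_eq_sum_single (a k)
  conv_lhs => rw [h, ← auxML_apply]
  rw [MultilinearMap.map_sum]
  simp only [auxML_apply]

lemma aux_hom {K A : Type} [Field K] [Ring A] [Algebra K A] {m : ℕ}
    (α : Equiv.Perm (Fin m) → K) (φ : A →ₐ[K] A) {x : A}
    (hx : x ∈ Submodule.span K (mlImage α : Set A)) :
    φ x ∈ Submodule.span K (mlImage α : Set A) := by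
  induction hx using Submodule.span_induction with
  | mem x h =>
    obtain ⟨a, rfl⟩ := h
    apply Submodule.subset_span
    refine ⟨fun k => φ (a k), ?_⟩
    simp [mlEval, map_sum, map_list_prod, List.map_ofFn, Function.comp_def]
  | zero => simp
  | add x y _ _ h1 h2 => rw [map_add]; exact add_mem h1 h2
  | smul c x _ h => rw [map_smul]; exact Submodule.smul_mem _ _ h

def auxConj {K A : Type} [Field K] [Ring A] [Algebra K A] (P Q : A) (h : Q * P = 1)
    (h' : P * Q = 1) : A →ₐ[K] A :=
  AlgHom.ofLinearMap ((LinearMap.mulLeft K P).comp (LinearMap.mulRight K Q))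
    (by simp [h']) (by
      intro x y
      simp only [LinearMap.comp_apply, LinearMap.mulLeft_apply, LinearMap.mulRight_apply]
      calc P * (x * y * Q) = P * x * 1 * y * Q := by noncomm_ring
        _ = P * (x * Q) * (P * (y * Q)) := by rw [← h]; noncomm_ring)

/-- a multilinear polynomial fails (S1) iff the linear span of its image on
`Mₙ(K)` contains `slₙ(K)`. -/
theorem stmt_6 {K : Type} [Field K] (n : ℕ) (hn : 2 ≤ n) {m : ℕ}
    (α : Equiv.Perm (Fin m) → K) :
    ¬ StmtS1 n α ↔
      slSet K n ⊆ (Submodule.span K (mlImage α : Set (Matrix (Fin n) (Fin n) K)) :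
        Set (Matrix (Fin n) (Fin n) K)) := by
  constructor
  · intro hS
    unfold StmtS1 at hS
    push Not at hS
    obtain ⟨g, a, ha, hg, hne⟩ := hS
    rw [aux_expand] at hne
    obtain ⟨r, _, hr⟩ := Finset.exists_ne_zero_of_sum_ne_zero hne
    set b : Fin m → Matrix (Fin n) (Fin n) K :=
      fun k => Matrix.single (r k).1 (r k).2 (a k (r k).1 (r k).2) with hb
    have hb0 : ∀ k i j, b k i j ≠ 0 → (r k).1 = i ∧ (r k).2 = j ∧ a k i j ≠ 0 := by
      intro k i j h
      simp only [hb, Matrix.single_apply] at h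
      split_ifs at h with h1
      · obtain ⟨rfl, rfl⟩ := h1
        exact ⟨rfl, rfl, h⟩
      · exact absurd rfl h
    obtain ⟨p, q, hpq⟩ : ∃ p q, mlEval α b p q ≠ 0 := by
      by_contra! hcon
      exact hr (Matrix.ext hcon)
    have hne' : p ≠ q := by
      have := aux_eval (fun i : Fin n => (i.val : ZMod n)) α g b (fun k i j h => by
        by_contra h'
        exact (hb0 k i j h).2.2 (ha k i j h')) p q hpq
      rintro rfl
      exact hg (by rw [← this]; simp)
    have hW := aux_eval (fun i : Fin n => (Pi.single i 1 : Fin n → ℤ)) α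
      (fun k => Pi.single (r k).2 1 - Pi.single (r k).1 1) b (fun k i j h => by
        obtain ⟨h1, h2, _⟩ := hb0 k i j h
        rw [h1, h2])
    have heq : mlEval α b = Matrix.single p q (mlEval α b p q) := by
      ext i j
      rw [Matrix.single_apply]
      split_ifs with h
      · rw [h.1, h.2]
      · by_contra h0
        have e := (hW i j h0).trans (hW p q hpq).symm
        apply h
        have e1 := congrFun e p
        have e2 := congrFun e q
        simp only [Pi.sub_apply, Pi.single_apply] at e1 e2
        constructor
        · by_contra hc
          simp only [hne', hc, if_true, if_false] at e1
          split_ifs at e1 <;> simp at e1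
        · by_contra hc
          have hc' : ¬ q = j := fun h => hc h
          simp only [hne'.symm, hc', if_true, if_false] at e2
          split_ifs at e2 <;> simp at e2
    set V := Submodule.span K (mlImage α : Set (Matrix (Fin n) (Fin n) K)) with hV
    have hV1 : Matrix.single p q (1 : K) ∈ V := by
      have h1 : mlEval α b ∈ V := Submodule.subset_span ⟨b, rfl⟩
      rw [heq] at h1
      have h2 := V.smul_mem (mlEval α b p q)⁻¹ h1
      rwa [Matrix.smul_single, smul_eq_mul, inv_mul_cancel₀ hpq] at h2
    have hV2 : ∀ k l, k ≠ l → Matrix.single k l (1 : K) ∈ V := by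
      intro k l hkl
      obtain ⟨e, he1, he2⟩ : ∃ e : Equiv.Perm (Fin n), e p = k ∧ e q = l := by
        refine ⟨(Equiv.swap p k).trans (Equiv.swap (Equiv.swap p k q) l), ?_, by simp⟩
        simp only [Equiv.trans_apply, Equiv.swap_apply_left]
        apply Equiv.swap_apply_of_ne_of_ne _ hkl
        intro h
        apply hne'
        apply (Equiv.swap p k).injective
        rw [← h, Equiv.swap_apply_left]
      have := aux_hom α (Matrix.reindexAlgEquiv K K e).toAlgHom hV1
      convert this using 1
      ext i j
      subst he1 he2
      simp [Matrix.single_apply, Equiv.eq_symm_apply]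
    have hV3 : ∀ k l, Matrix.single k k (1 : K) - Matrix.single l l 1 ∈ V := by
      intro k l
      by_cases hkl : k = l
      · simp [hkl]
      have hsq : Matrix.single k l (1 : K) * Matrix.single k l 1 = 0 :=
        Matrix.single_mul_single_of_ne _ _ _ _ (Ne.symm hkl) _
      have := aux_hom α (auxConj (K := K) (1 + Matrix.single k l (1 : K))
        (1 - Matrix.single k l (1 : K))
        (by rw [sub_mul, one_mul, mul_add, hsq]; simp)
        (by rw [add_mul, one_mul, mul_sub, hsq]; simp)) (hV2 l k (Ne.symm hkl))
      have e : auxConj (K := K) (1 + Matrix.single k l (1 : K))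
        (1 - Matrix.single k l (1 : K))
        (by rw [sub_mul, one_mul, mul_add, hsq]; simp)
        (by rw [add_mul, one_mul, mul_sub, hsq]; simp) (Matrix.single l k (1 : K))
        = Matrix.single l k (1 : K) + (Matrix.single k k 1 - Matrix.single l l 1)
          - Matrix.single k l 1 := by
        simp only [auxConj, AlgHom.ofLinearMap_apply, LinearMap.comp_apply,
          LinearMap.mulLeft_apply, LinearMap.mulRight_apply]
        simp only [add_mul, mul_sub, one_mul, mul_one, Matrix.single_mul_single_same]
        abel
      rw [e] at this
      have h3 := V.add_mem (V.sub_mem this (hV2 l k (Ne.symm hkl))) (hV2 k l hkl)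
      convert h3 using 1
      abel
    intro X hX
    have hX' : ∑ i, X i i = 0 := hX
    let z : Fin n := ⟨0, by omega⟩
    have hdec : X = ∑ i, ∑ j, X i j • (Matrix.single i j (1 : K)
        - if i = j then Matrix.single z z 1 else 0) := by
      simp only [smul_sub, Finset.sum_sub_distrib, smul_ite, smul_zero, Finset.sum_ite_eq,
        Finset.mem_univ, if_true, ← Finset.sum_smul, hX', zero_smul, sub_zero]
      conv_lhs => rw [Matrix.matrix_eq_sum_single X]
      simp [Matrix.smul_single]
    rw [hdec]
    refine V.sum_mem fun i _ => V.sum_mem fun j _ => V.smul_mem _ ?_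
    split_ifs with hij
    · subst hij; exact hV3 i z
    · rw [sub_zero]; exact hV2 i j hij
  · intro hsub hS
    let z : Fin n := ⟨0, by omega⟩
    let o : Fin n := ⟨1, by omega⟩
    have hzo : z ≠ o := by simp [z, o]
    have hzero : ∀ x ∈ Submodule.span K (mlImage α : Set (Matrix (Fin n) (Fin n) K)),
        x z o = 0 := by
      intro x hx
      induction hx using Submodule.span_induction with
      | mem x h =>
        obtain ⟨a, rfl⟩ := h
        by_contra hne
        rw [aux_expand, Matrix.sum_apply] at hne
        obtain ⟨r, _, hr⟩ := Finset.exists_ne_zero_of_sum_ne_zero hne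
        have hh : ∀ k i j, (Matrix.single (r k).1 (r k).2 (a k (r k).1 (r k).2)) i j ≠ 0 →
            ((j.val : ZMod n) - (i.val : ZMod n))
              = (((r k).2.val : ZMod n) - ((r k).1.val : ZMod n)) := by
          intro k i j h
          rw [Matrix.single_apply] at h
          split_ifs at h with h1
          · rw [h1.1, h1.2]
          · exact absurd rfl h
        have h1 := aux_eval (fun i : Fin n => (i.val : ZMod n)) α _ _ hh z o hr
        apply hr
        rw [hS _ _ (fun k i j h => by
          by_contra h'
          exact h (hh k i j h')) (by
            rw [← h1]
            have : Fact (1 < n) := ⟨by omega⟩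
            simp [z, o])]
        rfl
      | zero => rfl
      | add x y _ _ h1 h2 => simp [h1, h2]
      | smul c x _ h => simp [h]
    have := hzero (Matrix.single z o 1) (hsub (by
      simp [slSet, Matrix.trace_single_eq_of_ne _ _ _ hzo]))
    simp at this
end

section
/- Let K be a field of characteristic different from 2 and let f(x_1,…,x_m) be a multilinear polynomial over K. Then the image Im(f) of f evaluated on M_2(K) equals sl_2(K) if and only if f satisfies (S2) and f does not satisfy (S1) (with respect to the Vasilovsky Z_2-grading on M_2(K)). -/
/-- general homogeneity -/
def GH {K Γ : Type} [Field K] [AddCommGroup Γ] {n : ℕ} (d : Fin n → Γ) (g : Γ)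
    (a : Matrix (Fin n) (Fin n) K) : Prop :=
  ∀ i j : Fin n, d j - d i ≠ g → a i j = 0

theorem GH_list {K Γ : Type} [Field K] [AddCommGroup Γ] {n : ℕ} (d : Fin n → Γ) :
    ∀ {m : ℕ} (g : Fin m → Γ) (a : Fin m → Matrix (Fin n) (Fin n) K),
      (∀ i, GH d (g i) (a i)) → GH d (∑ i, g i) (List.ofFn a).prod := by
  intro m
  induction m with
  | zero =>
    intro g a _ i j hij
    have : i ≠ j := by
      rintro rfl
      simp at hij
    simp [Matrix.one_apply, this]
  | succ m ih =>
    intro g a h i j hij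
    rw [List.ofFn_succ, List.prod_cons, Matrix.mul_apply]
    refine Finset.sum_eq_zero fun k _ => ?_
    by_cases h1 : d k - d i = g 0
    · rw [ih (fun i => g i.succ) (fun i => a i.succ) (fun i => h i.succ) k j, mul_zero]
      intro h2
      apply hij
      rw [Fin.sum_univ_succ, ← h1, ← h2]
      abel
    · rw [h 0 i k h1, zero_mul]

theorem GH_mlEval {K Γ : Type} [Field K] [AddCommGroup Γ] {n : ℕ} (d : Fin n → Γ)
    {m : ℕ} (α : Equiv.Perm (Fin m) → K)
    (g : Fin m → Γ) (a : Fin m → Matrix (Fin n) (Fin n) K)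
    (h : ∀ i, GH d (g i) (a i)) : GH d (∑ i, g i) (mlEval α a) := by
  intro i j hij
  rw [mlEval, Matrix.sum_apply]
  refine Finset.sum_eq_zero fun σ _ => ?_
  rw [Matrix.smul_apply, GH_list d (fun i => g (σ i)) (fun i => a (σ i)) (fun i => h _) i j,
    smul_zero]
  rwa [Equiv.sum_comp σ g]

/-- homogeneous part -/
def prt {K Γ : Type} [Field K] [AddCommGroup Γ] [DecidableEq Γ] {n : ℕ} (d : Fin n → Γ) (g : Γ)
    (a : Matrix (Fin n) (Fin n) K) : Matrix (Fin n) (Fin n) K :=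
  Matrix.of fun i j => if d j - d i = g then a i j else 0

theorem GH_prt {K Γ : Type} [Field K] [AddCommGroup Γ] [DecidableEq Γ] {n : ℕ} (d : Fin n → Γ)
    (g : Γ) (a : Matrix (Fin n) (Fin n) K) : GH d g (prt d g a) := by
  intro i j h
  simp [prt, h]

theorem mlEval_expand {K Γ : Type} [Field K] [AddCommGroup Γ] [DecidableEq Γ] {n : ℕ}
    (d : Fin n → Γ) (T : Finset Γ) (hT : ∀ i j, d j - d i ∈ T)
    {m : ℕ} (α : Equiv.Perm (Fin m) → K) (a : Fin m → Matrix (Fin n) (Fin n) K) :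
    mlEval α a = ∑ r ∈ Fintype.piFinset (fun _ : Fin m => T),
      mlEval α (fun i => prt d (r i) (a i)) := by
  have h : a = fun i => ∑ γ ∈ T, prt d γ (a i) := by
    funext k
    ext i j
    rw [Matrix.sum_apply]
    simp [prt, hT]
  conv_lhs => rw [h]
  rw [← mlMap_apply, MultilinearMap.map_sum_finset]
  simp [mlMap_apply]

theorem mlEval_conj {K : Type} [Field K] {n m : ℕ} (α : Equiv.Perm (Fin m) → K)
    (P Q : Matrix (Fin n) (Fin n) K) (h1 : P * Q = 1) (h2 : Q * P = 1)
    (a : Fin m → Matrix (Fin n) (Fin n) K) :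
    mlEval α (fun i => P * a i * Q) = P * mlEval α a * Q := by
  have key : ∀ {k : ℕ} (b : Fin k → Matrix (Fin n) (Fin n) K),
      (List.ofFn fun i => P * b i * Q).prod = P * (List.ofFn b).prod * Q := by
    intro k
    induction k with
    | zero => intro b; simp [h1]
    | succ k ih =>
      intro b
      rw [List.ofFn_succ, List.ofFn_succ, List.prod_cons, List.prod_cons,
        ih (fun i => b i.succ)]
      calc P * b 0 * Q * (P * (List.ofFn fun i => b i.succ).prod * Q)
          = P * b 0 * (Q * P) * (List.ofFn fun i => b i.succ).prod * Q := by
            simp only [mul_assoc]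
        _ = _ := by rw [h2]; simp only [mul_assoc, one_mul]
  simp only [mlEval]
  rw [Finset.mul_sum, Finset.sum_mul]
  refine Finset.sum_congr rfl fun σ _ => ?_
  rw [key (fun i => a (σ i))]
  simp

theorem mlImage_conj {K : Type} [Field K] {n m : ℕ} (α : Equiv.Perm (Fin m) → K)
    (P Q : Matrix (Fin n) (Fin n) K) (h1 : P * Q = 1) (h2 : Q * P = 1)
    (M : Matrix (Fin n) (Fin n) K) (h : P * M * Q ∈ mlImage α) : M ∈ mlImage α := by
  obtain ⟨a, ha⟩ := h
  refine ⟨fun i => Q * a i * P, ?_⟩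
  rw [mlEval_conj α Q P h2 h1, ha]
  calc Q * (P * M * Q) * P = (Q * P) * M * (Q * P) := by simp only [mul_assoc]
    _ = M := by simp [h2]

/-- determinant of two vectors -/
def D2 {K : Type} [Field K] (x y : K × K) : K := x.1 * y.2 - x.2 * y.1

theorem rank_lemma {K V : Type} [Field K] [AddCommGroup V] [Module K V] :
    ∀ {m : ℕ} (G : MultilinearMap K (fun _ : Fin m => V) (K × K)),
      (∀ v i a b, D2 (G (Function.update v i a)) (G (Function.update v i b)) = 0) →
      ∀ v w, D2 (G v) (G w) = 0 := by
  intro m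
  induction m with
  | zero =>
    intro G _ v w
    rw [Subsingleton.elim v w]
    simp only [D2]; ring
  | succ m ih =>
    intro G h v w
    have h1 : ∀ u v v', D2 (G (Fin.cons u v)) (G (Fin.cons u v')) = 0 := by
      intro u
      refine ih (G.curryLeft u) ?_
      intro v i a b
      have := h (Fin.cons u v) i.succ a b
      rw [← Fin.cons_update, ← Fin.cons_update] at this
      exact this
    have h0 : ∀ u u' v, D2 (G (Fin.cons u v)) (G (Fin.cons u' v)) = 0 := by
      intro u u' v
      have := h (Fin.cons u v) 0 u u'
      rwa [Fin.update_cons_zero, Fin.update_cons_zero] at this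
    obtain ⟨u, v, rfl⟩ : ∃ u v', v = Fin.cons u v' := ⟨v 0, Fin.tail v, by simp⟩
    obtain ⟨u', v', rfl⟩ : ∃ u v', w = Fin.cons u v' := ⟨w 0, Fin.tail w, by simp⟩
    have hadd : ∀ v, G (Fin.cons (u + u') v) = G (Fin.cons u v) + G (Fin.cons u' v) :=
      fun v => MultilinearMap.cons_add G v u u'
    have e1 := h1 u v v'
    have e2 := h1 u' v v'
    have e3 := h1 (u + u') v v'
    have e4 := h0 u u' v
    have e5 := h0 u u' v'
    rw [hadd, hadd] at e3
    generalize G (Fin.cons u v) = A at *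
    generalize G (Fin.cons u v') = C at *
    generalize G (Fin.cons u' v) = E at *
    generalize G (Fin.cons u' v') = B at *
    obtain ⟨A1, A2⟩ := A
    obtain ⟨B1, B2⟩ := B
    obtain ⟨C1, C2⟩ := C
    obtain ⟨E1, E2⟩ := E
    simp only [D2, Prod.mk_add_mk] at *
    by_contra hne
    have c1 : C1 = 0 := by
      have : (A1 * B2 - A2 * B1) * C1 = 0 := by linear_combination A1 * e5 + B1 * e1
      exact (mul_eq_zero.mp this).resolve_left hne
    have c2 : C2 = 0 := by
      have : (A1 * B2 - A2 * B1) * C2 = 0 := by linear_combination A2 * e5 + B2 * e1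
      exact (mul_eq_zero.mp this).resolve_left hne
    subst c1 c2
    apply hne
    linear_combination e3 - e2

/-- parametrization of homogeneous components -/
def Lh (K : Type) [Field K] (g : ZMod 2) : (K × K) →ₗ[K] Matrix (Fin 2) (Fin 2) K where
  toFun p := if g = 0 then !![p.1, 0; 0, p.2] else !![0, p.1; p.2, 0]
  map_add' x y := by
    split_ifs <;> ext i j <;> fin_cases i <;> fin_cases j <;> simp
  map_smul' c x := by
    split_ifs <;> ext i j <;> fin_cases i <;> fin_cases j <;> simp

/-- off-diagonal entries -/
def Off (K : Type) [Field K] : Matrix (Fin 2) (Fin 2) K →ₗ[K] (K × K) where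
  toFun a := (a 0 1, a 1 0)
  map_add' x y := rfl
  map_smul' c x := rfl

theorem Off_apply {K : Type} [Field K] (a : Matrix (Fin 2) (Fin 2) K) :
    Off K a = (a 0 1, a 1 0) := rfl

abbrev dV : Fin 2 → ZMod 2 := fun j => (j.val : ZMod 2)
abbrev dZ : Fin 2 → ℤ := fun j => (j.val : ℤ)

theorem zmod2 (g : ZMod 2) : g = 0 ∨ g = 1 := by
  revert g; decide

theorem Lh_homog {K : Type} [Field K] (g : ZMod 2) (p : K × K) : GH dV g (Lh K g p) := by
  intro i j h
  rcases zmod2 g with rfl | rfl <;> fin_cases i <;> fin_cases j <;>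
    simp_all [Lh, dV]

theorem Lh_surj {K : Type} [Field K] (g : ZMod 2) (a : Matrix (Fin 2) (Fin 2) K)
    (h : GH dV g a) : ∃ p, Lh K g p = a := by
  rcases zmod2 g with rfl | rfl
  · refine ⟨(a 0 0, a 1 1), ?_⟩
    have h1 := h 0 1 (by decide)
    have h2 := h 1 0 (by decide)
    ext i j; fin_cases i <;> fin_cases j <;> simp [Lh, h1, h2]
  · refine ⟨(a 0 1, a 1 0), ?_⟩
    have h1 := h 0 0 (by decide)
    have h2 := h 1 1 (by decide)
    ext i j; fin_cases i <;> fin_cases j <;> simp [Lh, h1, h2]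

theorem odd_diag {K : Type} [Field K] {g : ZMod 2} (hg : g ≠ 0) (a : Matrix (Fin 2) (Fin 2) K)
    (h : GH dV g a) : a 0 0 = 0 ∧ a 1 1 = 0 := by
  rcases zmod2 g with rfl | rfl
  · exact absurd rfl hg
  · exact ⟨h 0 0 (by decide), h 1 1 (by decide)⟩

/-- all off-diagonal matrices are values -/
theorem off_values {K : Type} [Field K] {m : ℕ} (α : Equiv.Perm (Fin m) → K)
    (h : ¬ StmtS1 2 α) (p q : K) : !![0, p; q, 0] ∈ (mlImage α : Set (Matrix (Fin 2) (Fin 2) K)) := by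
  simp only [StmtS1] at h
  push Not at h
  obtain ⟨g, a, ha, hg, hne⟩ := h
  have ha' : ∀ i, GH dV (g i) (a i) := ha
  rw [mlEval_expand dZ {-1, 0, 1} (by decide)] at hne
  obtain ⟨r, -, hr⟩ := Finset.exists_ne_zero_of_sum_ne_zero hne
  set b : Fin m → Matrix (Fin 2) (Fin 2) K := fun i => prt dZ (r i) (a i) with hb
  have hbV : ∀ i, GH dV (g i) (b i) := by
    intro i k l hkl
    simp [hb, prt, ha' i k l hkl]
  have hbZ : ∀ i, GH dZ (r i) (b i) := fun i => GH_prt _ _ _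
  have hfZ := GH_mlEval dZ α r b hbZ
  have hfV := GH_mlEval dV α g b hbV
  obtain ⟨d0, d1⟩ := odd_diag hg _ hfV
  -- swapped tuple
  set S : Matrix (Fin 2) (Fin 2) K := !![0, 1; 1, 0] with hS
  have hSS : S * S = 1 := by
    ext i j; fin_cases i <;> fin_cases j <;> simp [hS, Matrix.mul_apply, Fin.sum_univ_two]
  have hsw : ∀ M : Matrix (Fin 2) (Fin 2) K, S * M * S = !![M 1 1, M 1 0; M 0 1, M 0 0] := by
    intro M
    rw [Matrix.eta_fin_two M]
    simp [hS]
  have hcV : ∀ i, GH dV (g i) (S * b i * S) := by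
    intro i k l hkl
    rw [hsw]
    have h00 := hbV i 0 0
    have h01 := hbV i 0 1
    have h10 := hbV i 1 0
    have h11 := hbV i 1 1
    have hh : (-1 : ZMod 2) = 1 := by decide
    fin_cases k <;> fin_cases l <;> simp_all [dV]
  have hval := mlEval_conj α S S hSS hSS b
  rw [hsw] at hval
  choose u hu using fun i => Lh_surj (g i) (b i) (hbV i)
  choose v hv using fun i => Lh_surj (g i) (S * b i * S) (hcV i)
  let G : MultilinearMap K (fun _ : Fin m => K × K) (K × K) :=
    (Off K).compMultilinearMap ((mlMap α).compLinearMap fun i => Lh K (g i))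
  have hG : ∀ x, G x = Off K (mlEval α fun i => Lh K (g i) (x i)) := by
    intro x
    simp [G, mlMap_apply]
  have hD : D2 (G u) (G v) ≠ 0 := by
    rw [hG, hG]
    simp only [hu, hv, hval]
    have hor : mlEval α b 0 1 = 0 ∨ mlEval α b 1 0 = 0 := by
      by_cases hs : (1 : ℤ) = ∑ i, r i
      · right
        apply hfZ
        rw [← hs]; decide
      · left
        apply hfZ
        simpa [dZ] using hs
    have hnn : ¬ (mlEval α b 0 1 = 0 ∧ mlEval α b 1 0 = 0) := by
      rintro ⟨z1, z2⟩
      apply hr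
      ext i j; fin_cases i <;> fin_cases j <;> simp [d0, d1, z1, z2]
    rw [Off_apply, Off_apply]
    generalize mlEval α b = F at *
    simp only [D2, Matrix.of_apply, Matrix.cons_val', Matrix.cons_val_zero, Matrix.cons_val_one,
      Matrix.cons_val_fin_one]
    intro hh
    rcases hor with z | z
    · refine hnn ⟨z, ?_⟩
      rw [z] at hh
      simpa using hh
    · refine hnn ⟨?_, z⟩
      rw [z] at hh
      simpa using hh
  have : ∃ v i a b, D2 (G (Function.update v i a)) (G (Function.update v i b)) ≠ 0 := by
    by_contra hcon
    push Not at hcon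
    exact hD (rank_lemma G hcon u v)
  obtain ⟨x, i, s, t, hst⟩ := this
  set X := G (Function.update x i s) with hX
  set Y := G (Function.update x i t) with hY
  have hex : ∃ c e : K, c • X + e • Y = (p, q) := by
    refine ⟨D2 (p, q) Y / D2 X Y, D2 X (p, q) / D2 X Y, ?_⟩
    clear_value X Y
    obtain ⟨X1, X2⟩ := X
    obtain ⟨Y1, Y2⟩ := Y
    simp only [D2] at *
    ext
    · simp only [Prod.fst_add, Prod.smul_fst, smul_eq_mul]
      rw [div_mul_eq_mul_div, div_mul_eq_mul_div, ← add_div, div_eq_iff hst]; ring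
    · simp only [Prod.snd_add, Prod.smul_snd, smul_eq_mul]
      rw [div_mul_eq_mul_div, div_mul_eq_mul_div, ← add_div, div_eq_iff hst]; ring
  obtain ⟨c, e, hce⟩ := hex
  rw [hX, hY, ← MultilinearMap.map_update_smul, ← MultilinearMap.map_update_smul,
    ← MultilinearMap.map_update_add, hG] at hce
  refine ⟨fun k => Lh K (g k) (Function.update x i (c • s + e • t) k), ?_⟩
  · obtain ⟨w0, w1⟩ := odd_diag hg _ (GH_mlEval dV α g
      (fun k => Lh K (g k) (Function.update x i (c • s + e • t) k)) (fun k => Lh_homog _ _))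
    rw [Off_apply, Prod.mk.injEq] at hce
    obtain ⟨o1, o2⟩ := hce
    ext k l; fin_cases k <;> fin_cases l
    · simpa using w0
    · simpa using o1
    · simpa using o2
    · simpa using w1

theorem sl_values {K : Type} [Field K] (hchar : (2 : K) ≠ 0) {m : ℕ}
    (α : Equiv.Perm (Fin m) → K)
    (h : ¬ StmtS1 2 α) (M : Matrix (Fin 2) (Fin 2) K) (hM : M.trace = 0) : M ∈ mlImage α := by
  have hL : ∀ s : K, !![1, 0; s, 1] * !![1, 0; -s, 1] = (1 : Matrix (Fin 2) (Fin 2) K) := by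
    intro s
    ext i j; fin_cases i <;> fin_cases j <;> simp [Matrix.mul_apply, Fin.sum_univ_two]
  have hU : ∀ s : K, !![1, s; 0, 1] * !![1, -s; 0, 1] = (1 : Matrix (Fin 2) (Fin 2) K) := by
    intro s
    ext i j; fin_cases i <;> fin_cases j <;> simp [Matrix.mul_apply, Fin.sum_univ_two]
  have hL' : ∀ s : K, !![1, 0; -s, 1] * !![1, 0; s, 1] = (1 : Matrix (Fin 2) (Fin 2) K) := by
    intro s; simpa using hL (-s)
  have hU' : ∀ s : K, !![1, -s; 0, 1] * !![1, s; 0, 1] = (1 : Matrix (Fin 2) (Fin 2) K) := by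
    intro s; simpa using hU (-s)
  have hc : ∀ a b c : K, c ≠ 0 → !![a, b; c, -a] ∈ (mlImage α : Set (Matrix (Fin 2) (Fin 2) K)) := by
    intro a b c hc
    apply mlImage_conj α _ _ (hU (-a / c)) (hU' (-a / c))
    convert off_values α h (b + a ^ 2 / c) c using 1
    ext i j; fin_cases i <;> fin_cases j <;> simp [Matrix.mul_apply, Fin.sum_univ_two] <;>
      field_simp <;> ring
  obtain ⟨a, b, c, rfl⟩ : ∃ a b c : K, M = !![a, b; c, -a] := by
    refine ⟨M 0 0, M 0 1, M 1 0, ?_⟩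
    rw [Matrix.trace_fin_two] at hM
    have : M 1 1 = - M 0 0 := by linear_combination hM
    ext i j; fin_cases i <;> fin_cases j <;> simp [this]
  by_cases h1 : c = 0
  · subst h1
    by_cases h3 : a = 0
    · subst h3
      simpa using off_values α h b 0
    · -- conjugate by a lower unipotent; choose s with s * (2 * a - s * b) ≠ 0
      have hs : ∃ s : K, s * (2 * a - s * b) ≠ 0 := by
        by_contra hcon
        push Not at hcon
        have e1 := hcon 1
        have e2 := hcon (-1)
        have : (2 * 2) * a = 0 := by linear_combination e1 - e2
        simp_all
      obtain ⟨s, hs⟩ := hs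
      apply mlImage_conj α _ _ (hL s) (hL' s)
      convert hc (a - s * b) b (s * (2 * a - s * b)) hs using 1
      ext i j; fin_cases i <;> fin_cases j <;> simp [Matrix.mul_apply, Fin.sum_univ_two] <;> ring
  · exact hc a b c h1

/-- over a field of characteristic different from `2`, the image of a multilinear
polynomial on `M₂(K)` equals `sl₂(K)` iff `f` satisfies (S2) and does not satisfy (S1) (with
respect to the Vasilovsky `ℤ₂`-grading). -/
theorem stmt_13 {K : Type} [Field K] (hchar : (2 : K) ≠ 0) {m : ℕ}
    (α : Equiv.Perm (Fin m) → K) :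
    (mlImage α : Set (Matrix (Fin 2) (Fin 2) K)) = slSet K 2 ↔
      StmtS2 2 α ∧ ¬ StmtS1 2 α := by
  constructor
  · intro h
    refine ⟨?_, ?_⟩
    · intro g a _ _
      have : mlEval α a ∈ slSet K 2 := by
        rw [← h]; exact ⟨a, rfl⟩
      exact this
    · intro h1
      have : (!![0, 1; 0, 0] : Matrix (Fin 2) (Fin 2) K) ∈ mlImage α := by
        rw [h]; simp [slSet, Matrix.trace_fin_two]
      obtain ⟨a, ha⟩ := this
      have hz : mlEval α a 0 1 = 0 := by
        rw [mlEval_expand dV Finset.univ (by simp), Matrix.sum_apply]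
        refine Finset.sum_eq_zero fun r _ => ?_
        by_cases hr : ∑ i, r i = 0
        · apply GH_mlEval dV α r _ (fun i => GH_prt _ _ _)
          rw [hr]; decide
        · rw [h1 r _ (fun i => GH_prt dV (r i) (a i)) hr]; rfl
      rw [ha] at hz
      simp at hz
  · rintro ⟨h2, h1⟩
    apply Set.Subset.antisymm
    · rintro _ ⟨a, rfl⟩
      change Matrix.trace _ = 0
      rw [mlEval_expand dV Finset.univ (by simp), Matrix.trace_sum]
      refine Finset.sum_eq_zero fun r _ => ?_
      by_cases hr : ∑ i, r i = 0
      · exact h2 r _ (fun i => GH_prt dV (r i) (a i)) hr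
      · obtain ⟨w0, w1⟩ := odd_diag hr _
          (GH_mlEval dV α r (fun i => prt dV (r i) (a i)) (fun i => GH_prt _ _ _))
        rw [Matrix.trace_fin_two, w0, w1, add_zero]
    · intro M hM
      exact sl_values hchar α h1 M hM
end
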